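/- Let r and s be positive integers and c_1, …, c_r nonzero real numbers, not all positive. Let h(n) be a nondecreasing function with h(n) = Ω(1) and h(n) = o(n^{s/2}/log n). For each i ∈ [r], let Y_i ∼ Bin(N_i, p_i) be independent with N_i = (1+o(1)) ρ_i · h(n) C(n,s) and p_i = (1+o(1)) α_i · log n / C(n,s), where ρ_i, α_i > 0 are constants. Set X = ∑_{i=1}^r c_i Y_i and suppose ∑_{i=1}^r c_i α_i ρ_i > 0. Then for any δ ∈ (−∞, ∑_{i=1}^r c_i α_i ρ_i), Pr(X ≤ (1+o(1)) δ · h(n) log n) = exp(−(1+o(1)) I* · h(n) log n), where I* = max_{t ≥ 0} ( −tδ + ∑_{i=1}^r α_i ρ_i (1 − e^{−t c_i}) ). -/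

import Mathlib

open Finset Filter

open scoped Classical

/-- The binomial probability mass function: `Pr(Bin(N,p) = y)`. -/
noncomputable def binomPMF (N : ℕ) (p : ℝ) (y : ℕ) : ℝ :=
  (N.choose y : ℝ) * p ^ y * (1 - p) ^ (N - y)

/-!
Write `L = h(n) log n` and `μ i = a i ρ i`, so that `Bin(N i, p i)` has mean `(1 + o(1)) μ i L`.

Upper bound: Chernoff's inequality with the tilting parameter `t` at which the exponent
`-t δ + ∑ i, μ i (1 - exp (-t c i))` is maximal. Stationarity at `t` says that the tilted
intensities `θ i = μ i exp (-t c i)` satisfy `∑ i, c i θ i = δ`.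

Lower bound: a single lattice point with `Y i ≈ θ i L` already carries the whole exponential rate.
Indeed `Bin(N i, p i)` puts mass `exp (-(1 + o(1)) L μ i klFun (θ i / μ i))` on its `i`-th
coordinate, the exponent being the relative entropy of the Poisson laws of means `θ i L` and
`μ i L`, and the sum of these costs is the maximal exponent. A negative `c i` makes the tilt exist,
and also lets the rounding error in `∑ i, c i Y i ≤ x` be absorbed by raising one coordinate.
-/

open Asymptotics
open InformationTheory (klFun klFun_apply klFun_nonneg klFun_eq_zero_iff)
open scoped Topology

section Limits

variable {κ : Type*} {l : Filter κ} {L : κ → ℝ}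

lemma tendsto_div_of_eq_one_add_mul {e u v : κ → ℝ} {a : ℝ} (he : Tendsto e l (𝓝 0))
    (hv : ∀ᶠ n in l, v n ≠ 0) (hu : ∀ n, u n = (1 + e n) * (a * v n)) :
    Tendsto (fun n ↦ u n / v n) l (𝓝 a) := by
  have hlim : Tendsto (fun n ↦ (1 + e n) * a) l (𝓝 a) := by
    simpa using (he.const_add 1).mul_const a
  refine hlim.congr' ?_
  filter_upwards [hv] with n hn
  rw [hu n, ← mul_assoc, mul_div_cancel_right₀ _ hn]

lemma tendsto_natCeil_div {u : κ → ℝ} {τ : ℝ} (hτ : 0 ≤ τ) (hL : Tendsto L l atTop)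
    (hu : Tendsto (fun n ↦ u n / L n) l (𝓝 τ)) :
    Tendsto (fun n ↦ (⌈u n⌉₊ : ℝ) / L n) l (𝓝 τ) := by
  have hlow : Tendsto (fun n ↦ max (u n / L n) 0) l (𝓝 τ) := by
    simpa [hτ] using hu.max (tendsto_const_nhds (x := (0 : ℝ)))
  have hupp : Tendsto (fun n ↦ max (u n / L n) 0 + (L n)⁻¹) l (𝓝 τ) := by
    simpa using hlow.add hL.inv_tendsto_atTop
  refine tendsto_of_tendsto_of_tendsto_of_le_of_le' hlow hupp ?_ ?_
  · filter_upwards [hL.eventually_gt_atTop 0] with n hn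
    exact max_le (by gcongr; exact Nat.le_ceil _) (by positivity)
  · filter_upwards [hL.eventually_gt_atTop 0] with n hn
    have hceil : (⌈u n⌉₊ : ℝ) ≤ max (u n) 0 + 1 :=
      calc (⌈u n⌉₊ : ℝ) ≤ ⌈max (u n) 0⌉₊ := by gcongr; exact le_max_left _ _
        _ ≤ max (u n) 0 + 1 := (Nat.ceil_lt_add_one (le_max_right _ _)).le
    calc (⌈u n⌉₊ : ℝ) / L n ≤ (max (u n) 0 + 1) / L n := by gcongr
      _ = max (u n / L n) 0 + (L n)⁻¹ := by
        rw [add_div, ← max_div_div_right hn.le, zero_div, one_div]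

lemma tendsto_atTop_of_tendsto_div {u : κ → ℝ} {τ : ℝ} (hτ : 0 < τ) (hL : Tendsto L l atTop)
    (hu : Tendsto (fun n ↦ u n / L n) l (𝓝 τ)) : Tendsto u l atTop := by
  refine (hu.pos_mul_atTop hτ hL).congr' ?_
  filter_upwards [hL.eventually_ne_atTop 0] with n hn
  exact div_mul_cancel₀ _ hn

lemma tendsto_mul_atTop_of_eventually_le {f g : κ → ℝ}
    (hf : ∃ b : ℝ, 0 < b ∧ ∀ᶠ n in l, b ≤ f n) (hg : Tendsto g l atTop) :
    Tendsto (fun n ↦ f n * g n) l atTop := by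
  obtain ⟨b, hb, hbf⟩ := hf
  refine tendsto_atTop_mono' l ?_ (hg.const_mul_atTop hb)
  filter_upwards [hbf, hg.eventually_ge_atTop 0] with n hn hgn
  gcongr

lemma exists_eq_exp_of_tendsto_log_div {P : κ → ℝ} {I : ℝ} (hI : I ≠ 0)
    (hL : ∀ᶠ n in l, L n ≠ 0) (hP : ∀ᶠ n in l, 0 < P n)
    (hlog : Tendsto (fun n ↦ Real.log (P n) / L n) l (𝓝 (-I))) :
    ∃ ε : κ → ℝ, Tendsto ε l (𝓝 0) ∧ ∀ᶠ n in l, P n = Real.exp (-((1 + ε n) * (I * L n))) := by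
  refine ⟨fun n ↦ -(Real.log (P n) / L n) / I - 1, ?_, ?_⟩
  · simpa [hI] using (hlog.neg.div_const I).sub_const 1
  · filter_upwards [hL, hP] with n hLn hPn
    have hexponent : -((1 + (-(Real.log (P n) / L n) / I - 1)) * (I * L n)) = Real.log (P n) := by
      field_simp
      ring
    rw [hexponent, Real.exp_log hPn]

lemma isLittleO_log_choose {s : ℕ} (hs : 0 < s) :
    (fun n : ℕ ↦ Real.log n) =o[atTop] fun n : ℕ ↦ (n.choose s : ℝ) := by
  have hlog : (fun n : ℕ ↦ Real.log n) =o[atTop] fun n : ℕ ↦ (n : ℝ) :=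
    Real.isLittleO_log_id_atTop.comp_tendsto tendsto_natCast_atTop_atTop
  have hpow : (fun n : ℕ ↦ (n : ℝ)) =O[atTop] fun n : ℕ ↦ (n : ℝ) ^ s := by
    refine IsBigO.of_bound' ?_
    filter_upwards [eventually_ge_atTop 1] with n hn
    rw [norm_pow]
    exact le_self_pow₀ (by simpa using hn) hs.ne'
  exact hlog.trans_isBigO (hpow.trans (isTheta_choose s).symm.isBigO)

lemma tendsto_log_factorial_div_sub_log :
    Tendsto (fun n : ℕ ↦ Real.log n.factorial / n - Real.log n) atTop (𝓝 (-1)) := by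
  have hlog : Tendsto (fun n : ℕ ↦ Real.log n / n) atTop (𝓝 0) :=
    Real.isLittleO_log_id_atTop.tendsto_div_nhds_zero.comp tendsto_natCast_atTop_atTop
  have hstirling : Tendsto (fun n : ℕ ↦ Real.log (Stirling.stirlingSeq n) / n) atTop (𝓝 0) :=
    (Stirling.tendsto_stirlingSeq_sqrt_pi.log (by positivity)).div_atTop
      tendsto_natCast_atTop_atTop
  have hconst : Tendsto (fun n : ℕ ↦ Real.log 2 / n) atTop (𝓝 0) :=
    tendsto_const_nhds.div_atTop tendsto_natCast_atTop_atTop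
  have hsum := (hstirling.add ((hconst.add hlog).const_mul (1 / 2))).sub_const 1
  simp only [add_zero, mul_zero, zero_sub] at hsum
  refine hsum.congr' ?_
  filter_upwards [eventually_gt_atTop 0] with n hn
  have hn0 : (n : ℝ) ≠ 0 := by positivity
  rw [Stirling.log_stirlingSeq_formula, Real.log_mul two_ne_zero hn0,
    Real.log_div hn0 (Real.exp_ne_zero 1), Real.log_exp]
  field_simp
  ring

lemma tendsto_log_one_sub_div {p : κ → ℝ} (hp : Tendsto p l (𝓝[≠] 0)) :
    Tendsto (fun n ↦ Real.log (1 - p n) / p n) l (𝓝 (-1)) := by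
  have hderiv : HasDerivAt (fun q : ℝ ↦ Real.log (1 - q)) (-1) 0 := by
    simpa using ((hasDerivAt_id (0 : ℝ)).const_sub 1).log (by simp)
  refine (hderiv.tendsto_slope_zero.comp hp).congr fun n ↦ ?_
  simp [div_eq_inv_mul]

lemma log_one_sub_div_le_log_descFactorial {N y : ℕ} (hy : 0 < y) (hyN : y < N) :
    Real.log (1 - y / N) ≤ Real.log (N.descFactorial y) / y - Real.log N := by
  have hy0 : (0 : ℝ) < y := by exact_mod_cast hy
  have hN0 : (0 : ℝ) < N := by exact_mod_cast hy.trans hyN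
  have hsub : (0 : ℝ) < N - y := sub_pos.2 (by exact_mod_cast hyN)
  have hpow : ((N : ℝ) - y) ^ y ≤ N.descFactorial y := by
    rw [← Nat.cast_sub hyN.le]
    exact_mod_cast (Nat.pow_le_pow_left (by lia) y).trans (N.pow_sub_le_descFactorial y)
  rw [one_sub_div hN0.ne', Real.log_div hsub.ne' hN0.ne']
  gcongr
  rw [le_div_iff₀' hy0, ← Real.log_pow]
  exact Real.log_le_log (by positivity) hpow

lemma log_descFactorial_div_le_log {N y : ℕ} (hy : 0 < y) (hyN : y ≤ N) :
    Real.log (N.descFactorial y) / y ≤ Real.log N := by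
  have hdesc : (0 : ℝ) < N.descFactorial y := by
    exact_mod_cast Nat.pos_of_ne_zero (Nat.descFactorial_eq_zero_iff_lt.not.2 hyN.not_gt)
  rw [div_le_iff₀' (by exact_mod_cast hy), ← Real.log_pow]
  exact Real.log_le_log hdesc (by exact_mod_cast N.descFactorial_le_pow y)

lemma tendsto_log_descFactorial_div_sub_log {N y : κ → ℕ} (hy : ∀ᶠ n in l, 0 < y n)
    (hyN : ∀ᶠ n in l, y n < N n) (hlim : Tendsto (fun n ↦ (y n : ℝ) / N n) l (𝓝 0)) :
    Tendsto (fun n ↦ Real.log ((N n).descFactorial (y n)) / y n - Real.log (N n)) l (𝓝 0) := by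
  have hlow : Tendsto (fun n ↦ Real.log (1 - (y n : ℝ) / N n)) l (𝓝 0) := by
    simpa using (hlim.const_sub 1).log (by simp)
  refine tendsto_of_tendsto_of_tendsto_of_le_of_le' hlow tendsto_const_nhds ?_ ?_
  · filter_upwards [hy, hyN] with n hyn hyNn
    exact log_one_sub_div_le_log_descFactorial hyn hyNn
  · filter_upwards [hy, hyN] with n hyn hyNn
    exact sub_nonpos.2 (log_descFactorial_div_le_log hyn hyNn.le)

end Limits

section Binomial

lemma binomPMF_pos {N y : ℕ} {p : ℝ} (hp : 0 < p) (hp1 : p < 1) (hy : y ≤ N) :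
    0 < binomPMF N p y :=
  mul_pos (mul_pos (by exact_mod_cast Nat.choose_pos hy) (pow_pos hp _))
    (pow_pos (sub_pos.2 hp1) _)

lemma binomPMF_nonneg {p : ℝ} (hp : 0 ≤ p) (hp1 : p ≤ 1) (N y : ℕ) : 0 ≤ binomPMF N p y :=
  mul_nonneg (mul_nonneg (Nat.cast_nonneg _) (pow_nonneg hp _)) (pow_nonneg (sub_nonneg.2 hp1) _)

lemma log_binomPMF {N y : ℕ} {p : ℝ} (hp : 0 < p) (hp1 : p < 1) (hy : y ≤ N) :
    Real.log (binomPMF N p y) = Real.log (N.descFactorial y) - Real.log y.factorial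
      + y * Real.log p + (N - y) * Real.log (1 - p) := by
  have hchoose : (N.choose y : ℝ) ≠ 0 := by exact_mod_cast (Nat.choose_pos hy).ne'
  have hfact : (y.factorial : ℝ) ≠ 0 := by exact_mod_cast y.factorial_ne_zero
  have hq : 1 - p ≠ 0 := (sub_pos.2 hp1).ne'
  rw [binomPMF, Real.log_mul (mul_ne_zero hchoose (pow_ne_zero _ hp.ne')) (pow_ne_zero _ hq),
    Real.log_mul hchoose (pow_ne_zero _ hp.ne'), Real.log_pow, Real.log_pow, Nat.cast_sub hy,
    Nat.descFactorial_eq_factorial_mul_choose, Nat.cast_mul, Real.log_mul hfact hchoose,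
    add_sub_cancel_left]

lemma sum_binomPMF_mul_exp (N : ℕ) (p t : ℝ) :
    ∑ y : Fin (N + 1), binomPMF N p y * Real.exp (t * (y : ℕ))
      = (p * Real.exp t + (1 - p)) ^ N := by
  rw [← Finset.sum_range (fun y ↦ binomPMF N p y * Real.exp (t * y)), add_pow]
  refine Finset.sum_congr rfl fun y _ ↦ ?_
  rw [binomPMF, mul_pow, ← Real.exp_nat_mul, mul_comm t]
  ring

lemma sum_binomPMF_mul_exp_le (N : ℕ) {p : ℝ} (hp : 0 ≤ p) (hp1 : p ≤ 1) (t : ℝ) :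
    ∑ y : Fin (N + 1), binomPMF N p y * Real.exp (t * (y : ℕ))
      ≤ Real.exp (N * p * (Real.exp t - 1)) := by
  have hbase : p * Real.exp t + (1 - p) ≤ Real.exp (p * (Real.exp t - 1)) := by
    linarith [Real.add_one_le_exp (p * (Real.exp t - 1))]
  rw [sum_binomPMF_mul_exp, mul_assoc, Real.exp_nat_mul]
  exact pow_le_pow_left₀ (add_nonneg (mul_nonneg hp (Real.exp_pos t).le) (sub_nonneg.2 hp1))
    hbase N

variable {κ : Type*} {l : Filter κ} {N y : κ → ℕ} {p L : κ → ℝ} {μ θ : ℝ}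

lemma eventually_prob_pos (hμ : 0 < μ) (hL : Tendsto L l atTop)
    (hNp : Tendsto (fun n ↦ N n * p n / L n) l (𝓝 μ)) : ∀ᶠ n in l, 0 < p n := by
  filter_upwards [(tendsto_atTop_of_tendsto_div hμ hL hNp).eventually_gt_atTop 0] with n hn
  exact pos_of_mul_pos_right hn (Nat.cast_nonneg _)

lemma tendsto_div_trials (hμ : 0 < μ) (hL : Tendsto L l atTop) (hp : Tendsto p l (𝓝 0))
    (hNp : Tendsto (fun n ↦ N n * p n / L n) l (𝓝 μ))
    (hy : Tendsto (fun n ↦ y n / L n) l (𝓝 θ)) :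
    Tendsto (fun n ↦ (y n : ℝ) / N n) l (𝓝 0) := by
  have hlim : Tendsto (fun n ↦ (y n / L n) / (N n * p n / L n) * p n) l (𝓝 0) := by
    simpa using (hy.div hNp hμ.ne').mul hp
  refine hlim.congr' ?_
  filter_upwards [hL.eventually_ne_atTop 0, eventually_prob_pos hμ hL hNp] with n hLn hpn
  field_simp

lemma eventually_lt_trials (hμ : 0 < μ) (hL : Tendsto L l atTop) (hp : Tendsto p l (𝓝 0))
    (hNp : Tendsto (fun n ↦ N n * p n / L n) l (𝓝 μ))
    (hy : Tendsto (fun n ↦ y n / L n) l (𝓝 θ)) : ∀ᶠ n in l, y n < N n := by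
  filter_upwards [(tendsto_atTop_of_tendsto_div hμ hL hNp).eventually_gt_atTop 0,
    (tendsto_div_trials hμ hL hp hNp hy).eventually_lt_const one_pos] with n hNn hlt
  have hN : (0 : ℝ) < N n := by
    refine (Nat.cast_nonneg _).lt_of_ne fun h0 ↦ ?_
    simp [← h0] at hNn
  exact_mod_cast (div_lt_one hN).1 hlt

lemma tendsto_log_binomPMF_div (hμ : 0 < μ) (hθ : 0 < θ) (hL : Tendsto L l atTop)
    (hp : Tendsto p l (𝓝 0)) (hNp : Tendsto (fun n ↦ N n * p n / L n) l (𝓝 μ))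
    (hy : Tendsto (fun n ↦ y n / L n) l (𝓝 θ)) :
    Tendsto (fun n ↦ Real.log (binomPMF (N n) (p n) (y n)) / L n) l
      (𝓝 (-(μ * klFun (θ / μ)))) := by
  have hppos := eventually_prob_pos hμ hL hNp
  have hyN := eventually_lt_trials hμ hL hp hNp hy
  have hytop : Tendsto y l atTop :=
    tendsto_natCast_atTop_iff.1 (tendsto_atTop_of_tendsto_div hθ hL hy)
  have hdesc := tendsto_log_descFactorial_div_sub_log (hytop.eventually_gt_atTop 0) hyN
    (tendsto_div_trials hμ hL hp hNp hy)
  have hfact := tendsto_log_factorial_div_sub_log.comp hytop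
  have hratio := (hNp.div hy hθ.ne').log (div_pos hμ hθ).ne'
  have hcompl := tendsto_log_one_sub_div
    (tendsto_nhdsWithin_iff.2 ⟨hp, hppos.mono fun n hn ↦ hn.ne'⟩)
  have hlim := (hy.mul ((hdesc.sub hfact).add hratio)).add ((hNp.sub (hy.mul hp)).mul hcompl)
  have hrate : θ * (0 - -1 + Real.log (μ / θ)) + (μ - θ * 0) * -1 = -(μ * klFun (θ / μ)) := by
    rw [klFun_apply, ← inv_div θ μ, Real.log_inv]
    field_simp
    ring
  rw [hrate] at hlim
  refine hlim.congr' ?_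
  filter_upwards [hL.eventually_gt_atTop 0, hppos, hp.eventually_lt_const one_pos,
    hytop.eventually_gt_atTop 0, hyN] with n hLn hpn hp1n hyn hyNn
  have hy0 : (0 : ℝ) < y n := by exact_mod_cast hyn
  have hN0 : (0 : ℝ) < N n := by exact_mod_cast hyn.trans hyNn
  simp only [Pi.div_apply, Function.comp_apply]
  rw [log_binomPMF hpn hp1n hyNn.le, div_div_div_cancel_right₀ hLn.ne',
    Real.log_div (by positivity) hy0.ne', Real.log_mul hN0.ne' hpn.ne']
  field_simp
  ring

end Binomial

section Tilting

variable {ι : Type*}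

/-- The intensities `μ` exponentially tilted by `-t c`: the means of independent Poisson variables
of means `μ i` after reweighting by `exp (-t ∑ i, c i Y i)`. -/
noncomputable def tiltedIntensity (c μ : ι → ℝ) (t : ℝ) (i : ι) : ℝ :=
  μ i * Real.exp (-t * c i)

variable {c μ : ι → ℝ} {t : ℝ}

lemma tiltedIntensity_pos {i : ι} (hμ : 0 < μ i) : 0 < tiltedIntensity c μ t i :=
  mul_pos hμ (Real.exp_pos _)

lemma mul_tiltedIntensity_le {i : ι} (hμ : 0 ≤ μ i) (ht : 0 ≤ t) :
    c i * tiltedIntensity c μ t i ≤ c i * μ i := by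
  have hexp : c i * Real.exp (-t * c i) ≤ c i := by
    rcases le_total 0 (c i) with hc | hc
    · exact mul_le_of_le_one_right hc (Real.exp_le_one_iff.2 (by nlinarith))
    · exact mul_le_of_one_le_right hc (Real.one_le_exp (by nlinarith))
  calc c i * tiltedIntensity c μ t i = μ i * (c i * Real.exp (-t * c i)) := by
        rw [tiltedIntensity]; ring
    _ ≤ μ i * c i := by gcongr
    _ = c i * μ i := mul_comm _ _

lemma tendsto_mul_tiltedIntensity_atBot {i : ι} (hμ : 0 < μ i) (hc : c i < 0) :
    Tendsto (fun t ↦ c i * tiltedIntensity c μ t i) atTop atBot := by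
  have hexp : Tendsto (fun t ↦ Real.exp (-t * c i)) atTop atTop := by
    refine Real.tendsto_exp_atTop.comp ?_
    simpa only [neg_mul, mul_neg, id] using tendsto_id.atTop_mul_const (neg_pos.2 hc)
  simpa only [tiltedIntensity, ← mul_assoc] using
    hexp.const_mul_atTop_of_neg (mul_neg_of_neg_of_pos hc hμ)

variable [Fintype ι] {δ : ℝ}

/-- The Chernoff exponent at parameter `t` for the event `∑ i, c i * Y i ≤ δ`, with independent
Poisson variables `Y i` of means `μ i`. -/
noncomputable def chernoffExponent (c μ : ι → ℝ) (δ t : ℝ) : ℝ :=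
  -t * δ + ∑ i, μ i * (1 - Real.exp (-t * c i))

/-- The optimal Chernoff exponent, written `I*` in the paper. A junk value unless the supremum is
finite. -/
noncomputable def chernoffRate (c μ : ι → ℝ) (δ : ℝ) : ℝ :=
  sSup {z : ℝ | ∃ t : ℝ, 0 ≤ t ∧ z = chernoffExponent c μ δ t}

lemma tendsto_sum_mul_tiltedIntensity_atBot (hμ : ∀ i, 0 < μ i) (hc : ∃ i, c i < 0) :
    Tendsto (fun t ↦ ∑ i, c i * tiltedIntensity c μ t i) atTop atBot := by
  obtain ⟨i₀, hi₀⟩ := hc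
  refine tendsto_atBot_mono' atTop ?_ (tendsto_atBot_add_const_right _
    (∑ i ∈ univ.erase i₀, c i * μ i) (tendsto_mul_tiltedIntensity_atBot (hμ i₀) hi₀))
  filter_upwards [eventually_ge_atTop 0] with t ht
  rw [← Finset.add_sum_erase _ _ (mem_univ i₀)]
  exact add_le_add_right
    (Finset.sum_le_sum fun i _ ↦ mul_tiltedIntensity_le (hμ i).le ht) _

lemma exists_sum_mul_tiltedIntensity_eq (hμ : ∀ i, 0 < μ i) (hc : ∃ i, c i < 0)
    (hδ : δ < ∑ i, c i * μ i) : ∃ t, 0 < t ∧ ∑ i, c i * tiltedIntensity c μ t i = δ := by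
  have hcont : Continuous fun t ↦ ∑ i, c i * tiltedIntensity c μ t i := by
    unfold tiltedIntensity
    fun_prop
  have hzero : ∑ i, c i * tiltedIntensity c μ 0 i = ∑ i, c i * μ i := by simp [tiltedIntensity]
  obtain ⟨T, hT, hT0⟩ := ((tendsto_sum_mul_tiltedIntensity_atBot hμ hc).eventually_le_atBot δ
    |>.and (eventually_ge_atTop 0)).exists
  obtain ⟨t, ht, htδ⟩ := intermediate_value_Icc' hT0 hcont.continuousOn ⟨hT, hzero ▸ hδ.le⟩
  refine ⟨t, ht.1.lt_of_ne ?_, htδ⟩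
  rintro rfl
  exact hδ.ne (htδ.symm.trans hzero)

lemma chernoffExponent_le_of_sum_eq (hμ : ∀ i, 0 ≤ μ i)
    (ht : ∑ i, c i * tiltedIntensity c μ t i = δ) (u : ℝ) :
    chernoffExponent c μ δ u ≤ chernoffExponent c μ δ t := by
  have hterm (i : ι) : μ i * (1 - Real.exp (-u * c i))
      ≤ μ i * (1 - Real.exp (-t * c i)) + (u - t) * (c i * tiltedIntensity c μ t i) := by
    have htangent := Real.add_one_le_exp ((t - u) * c i)
    have hsplit : Real.exp (-u * c i) = Real.exp (-t * c i) * Real.exp ((t - u) * c i) := by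
      rw [← Real.exp_add]
      ring_nf
    have hmul := mul_le_mul_of_nonneg_left htangent
      (mul_nonneg (hμ i) (Real.exp_pos (-t * c i)).le)
    rw [hsplit, tiltedIntensity]
    linarith
  have hsum := Finset.sum_le_sum fun i (_ : i ∈ univ) ↦ hterm i
  rw [Finset.sum_add_distrib, ← Finset.mul_sum, ht] at hsum
  unfold chernoffExponent
  linarith

lemma chernoffRate_eq_chernoffExponent (hμ : ∀ i, 0 ≤ μ i) (ht0 : 0 ≤ t)
    (ht : ∑ i, c i * tiltedIntensity c μ t i = δ) :
    chernoffRate c μ δ = chernoffExponent c μ δ t := by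
  refine IsGreatest.csSup_eq ⟨⟨t, ht0, rfl⟩, ?_⟩
  rintro _ ⟨u, -, rfl⟩
  exact chernoffExponent_le_of_sum_eq hμ ht u

lemma chernoffExponent_eq_sum_klFun (hμ : ∀ i, μ i ≠ 0)
    (ht : ∑ i, c i * tiltedIntensity c μ t i = δ) :
    chernoffExponent c μ δ t = ∑ i, μ i * klFun (tiltedIntensity c μ t i / μ i) := by
  rw [chernoffExponent, ← ht, Finset.mul_sum, ← Finset.sum_add_distrib]
  refine Finset.sum_congr rfl fun i _ ↦ ?_
  rw [tiltedIntensity, mul_div_cancel_left₀ _ (hμ i), klFun_apply, Real.log_exp]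
  ring

lemma chernoffExponent_pos (hμ : ∀ i, 0 < μ i) (ht0 : t ≠ 0) (hc : ∃ i, c i ≠ 0)
    (ht : ∑ i, c i * tiltedIntensity c μ t i = δ) : 0 < chernoffExponent c μ δ t := by
  have hratio (i : ι) : 0 ≤ tiltedIntensity c μ t i / μ i :=
    (div_pos (tiltedIntensity_pos (hμ i)) (hμ i)).le
  obtain ⟨i, hi⟩ := hc
  have hne : klFun (tiltedIntensity c μ t i / μ i) ≠ 0 := by
    rw [Ne, klFun_eq_zero_iff (hratio i), tiltedIntensity, mul_div_cancel_left₀ _ (hμ i).ne',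
      Real.exp_eq_one_iff]
    exact mul_ne_zero (neg_ne_zero.2 ht0) hi
  rw [chernoffExponent_eq_sum_klFun (fun i ↦ (hμ i).ne') ht]
  exact Finset.sum_pos' (fun j _ ↦ mul_nonneg (hμ j).le (klFun_nonneg (hratio j)))
    ⟨i, mem_univ i, mul_pos (hμ i) ((klFun_nonneg (hratio i)).lt_of_ne' hne)⟩

end Tilting

section LatticePoints

variable {ι κ : Type*} [Fintype ι] {l : Filter κ} {L x : κ → ℝ}

lemma exists_nat_points_sum_mul_le {c θ : ι → ℝ} (hθ : ∀ i, 0 ≤ θ i) (hc : ∃ i, c i < 0)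
    (hL : Tendsto L l atTop)
    (hx : Tendsto (fun n ↦ x n / L n) l (𝓝 (∑ i, c i * θ i))) :
    ∃ y : ι → κ → ℕ, (∀ i, Tendsto (fun n ↦ y i n / L n) l (𝓝 (θ i))) ∧
      ∀ n, ∑ i, c i * (y i n : ℝ) ≤ x n := by
  obtain ⟨i₀, hi₀⟩ := hc
  let z (i : ι) (n : κ) : ℕ := ⌈θ i * L n⌉₊
  let excess (n : κ) : ℝ := (∑ i, c i * (z i n : ℝ) - x n) / -c i₀
  have hz (i : ι) : Tendsto (fun n ↦ (z i n : ℝ) / L n) l (𝓝 (θ i)) :=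
    (tendsto_nat_ceil_mul_div_atTop (hθ i)).comp hL
  have hexcess : Tendsto (fun n ↦ excess n / L n) l (𝓝 0) := by
    have hlim := ((tendsto_finsetSum univ fun i _ ↦ (hz i).const_mul (c i)).sub hx).div_const
      (-c i₀)
    rw [sub_self, zero_div] at hlim
    refine hlim.congr fun n ↦ ?_
    simp only [excess, ← mul_div_assoc, ← Finset.sum_div, ← sub_div]
    exact div_right_comm _ _ _
  have hceil := tendsto_natCeil_div le_rfl hL hexcess
  refine ⟨fun i n ↦ z i n + if i = i₀ then ⌈excess n⌉₊ else 0, fun i ↦ ?_, fun n ↦ ?_⟩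
  · beta_reduce
    split_ifs
    · simpa only [Nat.cast_add, add_div, add_zero] using (hz i).add hceil
    · simpa only [add_zero] using hz i
  · have hcorr : c i₀ * (⌈excess n⌉₊ : ℝ) ≤ x n - ∑ i, c i * (z i n : ℝ) := by
      have hle := (div_le_iff₀ (neg_pos.2 hi₀)).1 (Nat.le_ceil (excess n))
      linarith
    have hsum : ∑ i, c i * ((z i n + if i = i₀ then ⌈excess n⌉₊ else 0 : ℕ) : ℝ)
        = ∑ i, c i * (z i n : ℝ) + c i₀ * (⌈excess n⌉₊ : ℝ) := by
      simp [mul_add, Finset.sum_add_distrib]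
    linarith

end LatticePoints

section WeightedSum

variable {ι κ : Type*}
variable {l : Filter κ} {L x : κ → ℝ} {N : ι → κ → ℕ} {p : ι → κ → ℝ} {c μ : ι → ℝ} {δ : ℝ}

lemma eventually_forall_prob_mem_Ioo [Finite ι] (hμ : ∀ i, 0 < μ i) (hL : Tendsto L l atTop)
    (hp : ∀ i, Tendsto (p i) l (𝓝 0))
    (hNp : ∀ i, Tendsto (fun n ↦ N i n * p i n / L n) l (𝓝 (μ i))) :
    ∀ᶠ n in l, ∀ i, p i n ∈ Set.Ioo 0 1 :=
  eventually_all.2 fun i ↦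
    (eventually_prob_pos (hμ i) hL (hNp i)).and ((hp i).eventually_lt_const one_pos)

variable [Fintype ι]

lemma tendsto_chernoff_bound_div (hNp : ∀ i, Tendsto (fun n ↦ N i n * p i n / L n) l (𝓝 (μ i)))
    (hx : Tendsto (fun n ↦ x n / L n) l (𝓝 δ)) (t : ℝ) :
    Tendsto (fun n ↦ (t * x n + ∑ i, N i n * p i n * (Real.exp (-t * c i) - 1)) / L n) l
      (𝓝 (-chernoffExponent c μ δ t)) := by
  have hlim := (hx.const_mul t).add (tendsto_finsetSum univ fun i _ ↦
    (hNp i).mul_const (Real.exp (-t * c i) - 1))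
  have hvalue : t * δ + ∑ i, μ i * (Real.exp (-t * c i) - 1) = -chernoffExponent c μ δ t := by
    simp only [chernoffExponent, neg_add, neg_mul, neg_neg, ← Finset.sum_neg_distrib,
      ← mul_neg, neg_sub]
  rw [hvalue] at hlim
  refine hlim.congr fun n ↦ ?_
  rw [add_div, Finset.sum_div, mul_div_assoc]
  simp only [div_mul_eq_mul_div]

variable [DecidableEq ι]

/-- `Pr(∑ i, c i * Y i ≤ x)` for independent `Y i ∼ Bin(N i, p i)`. -/
noncomputable def weightedBinomialCDF (c : ι → ℝ) (N : ι → ℕ) (p : ι → ℝ) (x : ℝ) : ℝ :=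
  ∑ y : (i : ι) → Fin (N i + 1),
    (∏ i, binomPMF (N i) (p i) (y i)) * (if ∑ i, c i * ((y i : ℕ) : ℝ) ≤ x then 1 else 0)

lemma prod_binomPMF_le_weightedBinomialCDF (c : ι → ℝ) {N y : ι → ℕ} {p : ι → ℝ} {x : ℝ}
    (hp : ∀ i, 0 ≤ p i) (hp1 : ∀ i, p i ≤ 1) (hyN : ∀ i, y i ≤ N i)
    (hyx : ∑ i, c i * (y i : ℝ) ≤ x) :
    ∏ i, binomPMF (N i) (p i) (y i) ≤ weightedBinomialCDF c N p x := by
  have hterm := Finset.single_le_sum (f := fun y : (i : ι) → Fin (N i + 1) ↦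
      (∏ i, binomPMF (N i) (p i) (y i)) *
        (if ∑ i, c i * ((y i : ℕ) : ℝ) ≤ x then (1 : ℝ) else 0))
    (fun y _ ↦ mul_nonneg (Finset.prod_nonneg fun i _ ↦ binomPMF_nonneg (hp i) (hp1 i) _ _)
      (by split_ifs <;> norm_num))
    (mem_univ fun i ↦ (⟨y i, Nat.lt_succ_of_le (hyN i)⟩ : Fin (N i + 1)))
  rwa [if_pos hyx, mul_one] at hterm

lemma weightedBinomialCDF_le_exp (c : ι → ℝ) (N : ι → ℕ) {p : ι → ℝ} (x : ℝ) {t : ℝ}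
    (hp : ∀ i, 0 ≤ p i) (hp1 : ∀ i, p i ≤ 1) (ht : 0 ≤ t) :
    weightedBinomialCDF c N p x
      ≤ Real.exp (t * x + ∑ i, N i * p i * (Real.exp (-t * c i) - 1)) := by
  have hindicator (y : (i : ι) → Fin (N i + 1)) :
      (if ∑ i, c i * ((y i : ℕ) : ℝ) ≤ x then (1 : ℝ) else 0)
        ≤ Real.exp (t * x) * ∏ i, Real.exp (-t * c i * (y i : ℕ)) := by
    rw [← Real.exp_sum, ← Real.exp_add]
    simp only [mul_assoc, ← Finset.mul_sum]
    split_ifs with hy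
    · exact Real.one_le_exp (by nlinarith)
    · positivity
  have hpmf (i : ι) (y : ℕ) := binomPMF_nonneg (hp i) (hp1 i) (N i) y
  calc weightedBinomialCDF c N p x
      ≤ ∑ y : (i : ι) → Fin (N i + 1), (∏ i, binomPMF (N i) (p i) (y i)) *
          (Real.exp (t * x) * ∏ i, Real.exp (-t * c i * (y i : ℕ))) :=
        Finset.sum_le_sum fun y _ ↦
          mul_le_mul_of_nonneg_left (hindicator y) (Finset.prod_nonneg fun i _ ↦ hpmf i _)
    _ = Real.exp (t * x) *
          ∏ i, ∑ y : Fin (N i + 1), binomPMF (N i) (p i) y * Real.exp (-t * c i * (y : ℕ)) := by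
        rw [Fintype.prod_sum, Finset.mul_sum]
        simp only [Finset.prod_mul_distrib, mul_left_comm]
    _ ≤ Real.exp (t * x) * ∏ i, Real.exp (N i * p i * (Real.exp (-t * c i) - 1)) := by
        gcongr with i
        · exact fun i _ ↦ Finset.sum_nonneg fun y _ ↦ mul_nonneg (hpmf i y) (Real.exp_pos _).le
        · exact sum_binomPMF_mul_exp_le (N i) (hp i) (hp1 i) (-t * c i)
    _ = Real.exp (t * x + ∑ i, N i * p i * (Real.exp (-t * c i) - 1)) := by
        rw [Real.exp_add, Real.exp_sum]

lemma exists_tendsto_le_log_weightedBinomialCDF_div {θ : ι → ℝ} (hμ : ∀ i, 0 < μ i)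
    (hθ : ∀ i, 0 < θ i) (hc : ∃ i, c i < 0) (hL : Tendsto L l atTop)
    (hp : ∀ i, Tendsto (p i) l (𝓝 0))
    (hNp : ∀ i, Tendsto (fun n ↦ N i n * p i n / L n) l (𝓝 (μ i)))
    (hx : Tendsto (fun n ↦ x n / L n) l (𝓝 (∑ i, c i * θ i))) :
    ∃ g : κ → ℝ, Tendsto g l (𝓝 (-∑ i, μ i * klFun (θ i / μ i))) ∧
      ∀ᶠ n in l, 0 < weightedBinomialCDF c (N · n) (p · n) (x n) ∧
        g n ≤ Real.log (weightedBinomialCDF c (N · n) (p · n) (x n)) / L n := by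
  obtain ⟨y, hy, hyx⟩ := exists_nat_points_sum_mul_le (fun i ↦ (hθ i).le) hc hL hx
  have hmass := tendsto_finsetSum univ fun i _ ↦
    tendsto_log_binomPMF_div (hμ i) (hθ i) hL (hp i) (hNp i) (hy i)
  rw [Finset.sum_neg_distrib] at hmass
  refine ⟨_, hmass, ?_⟩
  filter_upwards [hL.eventually_gt_atTop 0, eventually_forall_prob_mem_Ioo hμ hL hp hNp,
    eventually_all.2 fun i ↦ eventually_lt_trials (hμ i) hL (hp i) (hNp i) (hy i)]
    with n hLn hpn hyN
  have hpos (i : ι) : 0 < binomPMF (N i n) (p i n) (y i n) :=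
    binomPMF_pos (hpn i).1 (hpn i).2 (hyN i).le
  have hprod := prod_binomPMF_le_weightedBinomialCDF c (N := (N · n)) (p := (p · n))
    (fun i ↦ (hpn i).1.le) (fun i ↦ (hpn i).2.le) (fun i ↦ (hyN i).le) (hyx n)
  have hprod_pos := Finset.prod_pos fun i (_ : i ∈ univ) ↦ hpos i
  refine ⟨hprod_pos.trans_le hprod, ?_⟩
  rw [← Finset.sum_div, ← Real.log_prod fun i _ ↦ (hpos i).ne']
  gcongr

theorem exists_weightedBinomialCDF_eq_exp (hμ : ∀ i, 0 < μ i) (hc : ∃ i, c i < 0)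
    (hδ : δ < ∑ i, c i * μ i) (hL : Tendsto L l atTop) (hp : ∀ i, Tendsto (p i) l (𝓝 0))
    (hNp : ∀ i, Tendsto (fun n ↦ N i n * p i n / L n) l (𝓝 (μ i)))
    (hx : Tendsto (fun n ↦ x n / L n) l (𝓝 δ)) :
    ∃ ε : κ → ℝ, Tendsto ε l (𝓝 0) ∧ ∀ᶠ n in l,
      weightedBinomialCDF c (N · n) (p · n) (x n)
        = Real.exp (-((1 + ε n) * (chernoffRate c μ δ * L n))) := by
  obtain ⟨t, ht, htδ⟩ := exists_sum_mul_tiltedIntensity_eq hμ hc hδ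
  have hrate_pos : 0 < chernoffExponent c μ δ t :=
    chernoffExponent_pos hμ ht.ne' (hc.imp fun _ hi ↦ hi.ne) htδ
  obtain ⟨g, hg, hgP⟩ := exists_tendsto_le_log_weightedBinomialCDF_div hμ
    (fun i ↦ tiltedIntensity_pos (hμ i)) hc hL hp hNp (htδ ▸ hx)
  rw [← chernoffExponent_eq_sum_klFun (fun i ↦ (hμ i).ne') htδ] at hg
  rw [chernoffRate_eq_chernoffExponent (fun i ↦ (hμ i).le) ht.le htδ]
  refine exists_eq_exp_of_tendsto_log_div hrate_pos.ne' (hL.eventually_ne_atTop 0)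
    (hgP.mono fun _ hn ↦ hn.1) (tendsto_of_tendsto_of_tendsto_of_le_of_le' hg
      (tendsto_chernoff_bound_div hNp hx t) (hgP.mono fun _ hn ↦ hn.2) ?_)
  filter_upwards [hL.eventually_gt_atTop 0, hgP, eventually_forall_prob_mem_Ioo hμ hL hp hNp]
    with n hLn hPn hpn
  gcongr
  rw [Real.log_le_iff_le_exp hPn.1]
  exact weightedBinomialCDF_le_exp c (N · n) (x n) (fun i ↦ (hpn i).1.le)
    (fun i ↦ (hpn i).2.le) ht.le

end WeightedSum

theorem weighted_binomial_tail_general {ι κ : Type*} [Fintype ι] [DecidableEq ι] {l : Filter κ}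
    {c ρ a : ι → ℝ} (hc : ∃ i, c i < 0) (hρ : ∀ i, 0 < ρ i) (ha : ∀ i, 0 < a i)
    {h g M : κ → ℝ} (hgM : g =o[l] M) (hhg : Tendsto (fun n ↦ h n * g n) l atTop)
    {N : ι → κ → ℕ} {p : ι → κ → ℝ}
    (hN : ∃ eN : ι → κ → ℝ, (∀ i, Tendsto (eN i) l (𝓝 0)) ∧
      ∀ i n, (N i n : ℝ) = (1 + eN i n) * (ρ i * (h n * M n)))
    (hp : ∃ ep : ι → κ → ℝ, (∀ i, Tendsto (ep i) l (𝓝 0)) ∧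
      ∀ i n, p i n = (1 + ep i n) * (a i * (g n / M n)))
    {δ : ℝ} (hδ : δ < ∑ i, c i * a i * ρ i) {x : κ → ℝ}
    (hx : ∃ ex : κ → ℝ, Tendsto ex l (𝓝 0) ∧ ∀ n, x n = (1 + ex n) * (δ * (h n * g n))) :
    ∃ ε : κ → ℝ, Tendsto ε l (𝓝 0) ∧ ∀ᶠ n in l,
      weightedBinomialCDF c (N · n) (p · n) (x n)
        = Real.exp (-((1 + ε n) * (chernoffRate c (fun i ↦ a i * ρ i) δ * (h n * g n)))) := by
  obtain ⟨eN, heN, hN⟩ := hN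
  obtain ⟨ep, hep, hp⟩ := hp
  obtain ⟨ex, hex, hx⟩ := hx
  have hhg0 : ∀ᶠ n in l, h n ≠ 0 ∧ g n ≠ 0 :=
    (hhg.eventually_ne_atTop 0).mono fun _ ↦ mul_ne_zero_iff.1
  have hM0 : ∀ᶠ n in l, M n ≠ 0 := by
    filter_upwards [hgM.isBigO.eq_zero_imp, hhg0] with n hzero hn
    exact mt hzero hn.2
  have hNlim (i : ι) : Tendsto (fun n ↦ N i n / (h n * M n)) l (𝓝 (ρ i)) :=
    tendsto_div_of_eq_one_add_mul (heN i)
      ((hhg0.and hM0).mono fun _ hn ↦ mul_ne_zero hn.1.1 hn.2) (hN i)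
  have hplim (i : ι) : Tendsto (fun n ↦ p i n / (g n / M n)) l (𝓝 (a i)) :=
    tendsto_div_of_eq_one_add_mul (hep i)
      ((hhg0.and hM0).mono fun _ hn ↦ div_ne_zero hn.1.2 hn.2) (hp i)
  refine exists_weightedBinomialCDF_eq_exp (fun i ↦ mul_pos (ha i) (hρ i)) hc
    (by simpa only [mul_assoc] using hδ) hhg (fun i ↦ ?_) (fun i ↦ ?_)
    (tendsto_div_of_eq_one_add_mul hex (hhg.eventually_ne_atTop 0) hx)
  · have hlim : Tendsto (fun n ↦ p i n / (g n / M n) * (g n / M n)) l (𝓝 0) := by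
      simpa using (hplim i).mul hgM.tendsto_div_nhds_zero
    refine hlim.congr' ?_
    filter_upwards [hhg0, hM0] with n hn hMn
    exact div_mul_cancel₀ _ (div_ne_zero hn.2 hMn)
  · refine ((hplim i).mul (hNlim i)).congr' ?_
    filter_upwards [hhg0, hM0] with n ⟨hhn, hgn⟩ hMn
    field_simp

/-- Tail probability of a weighted sum of independent binomial variables:
`Pr(X ≤ (1+o(1)) δ h(n) log n) = exp(-(1+o(1)) I* h(n) log n)` where
`I* = max_{t ≥ 0} (-tδ + ∑ᵢ αᵢρᵢ(1 - e^{-t cᵢ}))`. -/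
theorem weighted_binomial_tail (r s : ℕ) (hr : 0 < r) (hs : 0 < s)
    (c : Fin r → ℝ) (hc : ∀ i, c i ≠ 0) (hcpos : ¬ ∀ i, 0 < c i)
    (h : ℕ → ℝ) (hmono : Monotone h)
    (hΩ : ∃ c₀ : ℝ, 0 < c₀ ∧ ∀ᶠ n : ℕ in atTop, c₀ ≤ h n)
    (hlittle : Tendsto (fun n : ℕ => h n * Real.log n / (n : ℝ) ^ ((s : ℝ) / 2))
      atTop (nhds 0))
    (ρ a : Fin r → ℝ) (hρ : ∀ i, 0 < ρ i) (ha : ∀ i, 0 < a i)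
    (N : Fin r → ℕ → ℕ) (p : Fin r → ℕ → ℝ)
    (hN : ∃ eN : Fin r → ℕ → ℝ, (∀ i, Tendsto (eN i) atTop (nhds 0)) ∧
      ∀ i n, ((N i n : ℕ) : ℝ) = (1 + eN i n) * (ρ i * (h n * (n.choose s : ℝ))))
    (hp : ∃ ep : Fin r → ℕ → ℝ, (∀ i, Tendsto (ep i) atTop (nhds 0)) ∧
      ∀ i n, p i n = (1 + ep i n) * (a i * (Real.log n / (n.choose s : ℝ))))
    (δ : ℝ) (hδ : δ < ∑ i, c i * a i * ρ i)
    (x : ℕ → ℝ) (hx : ∃ ex : ℕ → ℝ, Tendsto ex atTop (nhds 0) ∧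
      ∀ n, x n = (1 + ex n) * (δ * (h n * Real.log n))) :
    ∃ ε : ℕ → ℝ, Tendsto ε atTop (nhds 0) ∧
      ∀ᶠ n : ℕ in atTop,
        (∑ y : (i : Fin r) → Fin (N i n + 1),
            (∏ i, binomPMF (N i n) (p i n) (y i)) *
              (if (∑ i, c i * ((y i : ℕ) : ℝ)) ≤ x n then 1 else 0))
          = Real.exp (-((1 + ε n) *
              (sSup {z : ℝ | ∃ t : ℝ, 0 ≤ t ∧
                  z = -t * δ + ∑ i, a i * ρ i * (1 - Real.exp (-t * c i))} *
                (h n * Real.log n)))) := by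
  obtain ⟨i, hi⟩ := not_forall.1 hcpos
  exact weighted_binomial_tail_general ⟨i, (not_lt.1 hi).lt_of_ne (hc i)⟩ hρ ha
    (isLittleO_log_choose hs) (tendsto_mul_atTop_of_eventually_le hΩ
      (Real.tendsto_log_atTop.comp tendsto_natCast_atTop_atTop)) hN hp hδ hx
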